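/- Let Γ ≤ Δ be countable discrete groups with [Δ : Γ] = ∞, let θ be an invariant random subgroup of Γ, and let T ⊆ Δ be a transversal for the left cosets Δ/Γ. Then CIND_Γ^Δ(θ) is non-atomic if and only if there exists γ ∈ core_Δ(Γ) \ core_Δ(ker(θ)) such that ∑_{t∈T} (1 − θ(N_{t⁻¹γt}^Γ)) < ∞ and θ(N_{t⁻¹γt}^Γ) > 0 for all t ∈ T. -/

import Mathlib

open MeasureTheory

namespace IRSPaper


/-! ## Basic setup: the space of subgroups, invariant random subgroups -/

/-- The conjugation action of a group on its space of subgroups: `g • H = gHg⁻¹`. -/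
def conjSub {G : Type*} [Group G] (g : G) (H : Subgroup G) : Subgroup G :=
  Subgroup.map ((MulAut.conj g).toMonoidHom) H

/-- The topology on the space of subgroups of `G`, induced from the product topology
on `G → Bool` (i.e. the topology of `2^G`). -/
noncomputable instance instTopSub (G : Type*) [Group G] : TopologicalSpace (Subgroup G) :=
  TopologicalSpace.induced
    (fun (H : Subgroup G) (g : G) => @decide (g ∈ H) (Classical.dec _)) inferInstance

/-- The Borel σ-algebra on the space of subgroups. -/
noncomputable instance instMeasSub (G : Type*) [Group G] : MeasurableSpace (Subgroup G) :=
  borel _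

instance instBorelSub (G : Type*) [Group G] : BorelSpace (Subgroup G) := ⟨rfl⟩

/-- An invariant random subgroup: a Borel probability measure on `Sub(G)` which is invariant
under the conjugation action of `G`. -/
def IsIRS {G : Type*} [Group G] (θ : Measure (Subgroup G)) : Prop :=
  IsProbabilityMeasure θ ∧ ∀ g : G, Measure.map (conjSub g) θ = θ

/-- The basic set `N_F = {H ∈ Sub(G) : F ⊆ H}`. -/
def NSet {G : Type*} [Group G] (F : Set G) : Set (Subgroup G) :=
  {H : Subgroup G | F ⊆ (H : Set G)}

/-- For `Γ ≤ Δ` and `S ⊆ Δ`, the set of subgroups of `Γ` containing every element of `Γ`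
whose image in `Δ` lies in `S`.  When `S = t⁻¹Ft ⊆ Γ`, this is exactly the basic set
`N_{t⁻¹Ft}^Γ ⊆ Sub(Γ)`. -/
def NpullSet {Δ : Type*} [Group Δ] (Γ : Subgroup Δ) (S : Set Δ) : Set (Subgroup ↥Γ) :=
  {Λ : Subgroup ↥Γ | ∀ x : ↥Γ, (x : Δ) ∈ S → x ∈ Λ}

/-- `T` is a transversal for the left cosets `Δ/Γ`: each left coset `dΓ` contains exactly
one element of `T`. -/
def IsLeftTransversal {Δ : Type*} [Group Δ] (Γ : Subgroup Δ) (T : Set Δ) : Prop :=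
  ∀ d : Δ, ∃! t : Δ, t ∈ T ∧ d⁻¹ * t ∈ Γ

/-- The defining property of the co-induced invariant random subgroup
`ν = CIND_Γ^Δ(θ)` (with respect to the transversal `T`):  for every finite `F ⊆ Δ`,
`ν(N_F) = 0` if `F ⊄ core_Δ(Γ)` and `ν(N_F) = ∏_{t ∈ T} θ(N_{t⁻¹Ft}^Γ)` if `F ⊆ core_Δ(Γ)`. -/
def CindSpec {Δ : Type*} [Group Δ] (Γ : Subgroup Δ) (T : Set Δ)
    (θ : Measure (Subgroup ↥Γ)) (ν : Measure (Subgroup Δ)) : Prop :=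
  ∀ F : Finset Δ,
    (¬ (F : Set Δ) ⊆ (Γ.normalCore : Set Δ) → ν (NSet (F : Set Δ)) = 0) ∧
    ((F : Set Δ) ⊆ (Γ.normalCore : Set Δ) →
      ν (NSet (F : Set Δ)) =
        ∏' t : T, θ (NpullSet Γ ((fun d => (t : Δ)⁻¹ * d * (t : Δ)) '' (F : Set Δ))))

/-- Ergodicity of a (not necessarily probability-) measure-preserving action given by
an explicit family of maps: every invariant measurable set is null or conull. -/
def ErgodicAct {G α : Type*} [MeasurableSpace α] (act : G → α → α) (μ : Measure α) : Prop :=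
  ∀ s : Set α, MeasurableSet s → (∀ g : G, act g ⁻¹' s = s) → μ s = 0 ∨ μ sᶜ = 0

/-- Weak mixing of an action: the diagonal action on the square is ergodic. -/
def WeaklyMixingAct {G α : Type*} [MeasurableSpace α] (act : G → α → α) (μ : Measure α) : Prop :=
  ErgodicAct (fun (g : G) (p : α × α) => (act g p.1, act g p.2)) (μ.prod μ)

/-- A measure is non-atomic (has no atoms) if every singleton is null. -/
def NonAtomicMeasure {α : Type*} [MeasurableSpace α] (μ : Measure α) : Prop :=
  ∀ x : α, μ {x} = 0

/-- The kernel of an IRS `θ` of `Γ`: the set of `γ ∈ Γ` with `θ(N_γ) = 1`.  (For a probability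
measure this set is a subgroup; taking `Subgroup.closure` makes it a `Subgroup` on the nose.) -/
def kerIRS {Δ : Type*} [Group Δ] (Γ : Subgroup Δ) (θ : Measure (Subgroup ↥Γ)) : Subgroup ↥Γ :=
  Subgroup.closure {x : ↥Γ | θ {Λ : Subgroup ↥Γ | x ∈ Λ} = 1}

/-- `core_Δ(ker(θ))`, viewed as a subgroup of `Δ`. -/
def coreKer {Δ : Type*} [Group Δ] (Γ : Subgroup Δ) (θ : Measure (Subgroup ↥Γ)) : Subgroup Δ :=
  ((kerIRS Γ θ).map Γ.subtype).normalCore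


/-! ### Infinite products in `[0,1]` -/

open scoped ENNReal in
theorem tprod_eq_iInf_aux {ι : Type*} (f : ι → ℝ≥0∞) (hf : ∀ i, f i ≤ 1) :
    ∏' i, f i = ⨅ s : Finset ι, ∏ i ∈ s, f i := by
  apply HasProd.tprod_eq
  have h : Antitone (fun s : Finset ι => ∏ i ∈ s, f i) := by
    intro s t hst
    exact Finset.prod_le_prod_of_subset_of_le_one' hst (fun i _ _ => hf i)
  simpa [HasProd] using tendsto_atTop_iInf h

open scoped ENNReal in
theorem prod_mul_one_add_le {ι : Type*} (f : ι → ℝ≥0∞) (hf : ∀ i, f i ≤ 1) (s : Finset ι) :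
    (∏ i ∈ s, f i) * (∑ i ∈ s, (1 - f i)) ≤ 1 := by
  classical
  suffices h : (∏ i ∈ s, f i) * (1 + ∑ i ∈ s, (1 - f i)) ≤ 1 from
    le_trans (mul_le_mul_right le_add_self _) h
  induction s using Finset.induction_on with
  | empty => simp
  | insert a s ha ih =>
    rw [Finset.prod_insert ha, Finset.sum_insert ha]
    set P := ∏ i ∈ s, f i
    set S := ∑ i ∈ s, (1 - f i)
    have key : f a * (1 + ((1 - f a) + S)) ≤ 1 + S := by
      have h1 : f a * (1 + (1 - f a)) ≤ 1 := by
        have hx := hf a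
        calc f a * (1 + (1 - f a)) = f a + f a * (1 - f a) := by ring
          _ ≤ f a + 1 * (1 - f a) := by gcongr
          _ = 1 := by rw [one_mul, add_tsub_cancel_of_le hx]
      calc f a * (1 + ((1 - f a) + S)) = f a * (1 + (1 - f a)) + f a * S := by ring
        _ ≤ 1 + 1 * S := by gcongr; exact hf a
        _ = 1 + S := by rw [one_mul]
    calc f a * P * (1 + ((1 - f a) + S)) = P * (f a * (1 + ((1 - f a) + S))) := by ring
      _ ≤ P * (1 + S) := by gcongr
      _ ≤ 1 := ih

open scoped ENNReal in
theorem one_le_prod_add_sum {ι : Type*} (f : ι → ℝ≥0∞) (hf : ∀ i, f i ≤ 1) (s : Finset ι) :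
    1 ≤ (∏ i ∈ s, f i) + ∑ i ∈ s, (1 - f i) := by
  classical
  induction s using Finset.induction_on with
  | empty => simp
  | insert a s ha ih =>
    rw [Finset.prod_insert ha, Finset.sum_insert ha]
    have hP : ∏ i ∈ s, f i ≤ 1 := Finset.prod_le_one' (fun i _ => hf i)
    set P := ∏ i ∈ s, f i
    set S := ∑ i ∈ s, (1 - f i)
    have h1 : P ≤ f a * P + (1 - f a) := by
      calc P = (f a + (1 - f a)) * P := by rw [add_tsub_cancel_of_le (hf a), one_mul]
        _ = f a * P + (1 - f a) * P := by ring
        _ ≤ f a * P + (1 - f a) * 1 := by gcongr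
        _ = _ := by rw [mul_one]
    calc 1 ≤ P + S := ih
      _ ≤ (f a * P + (1 - f a)) + S := by gcongr
      _ = _ := by ring

open scoped ENNReal in
theorem tprod_pos_iff {ι : Type*} (f : ι → ℝ≥0∞) (hf : ∀ i, f i ≤ 1) :
    0 < ∏' i, f i ↔ (∑' i, (1 - f i)) < ⊤ ∧ ∀ i, 0 < f i := by
  classical
  rw [tprod_eq_iInf_aux f hf]
  constructor
  · intro h
    set a := ⨅ s : Finset ι, ∏ i ∈ s, f i with ha
    refine ⟨?_, fun i => ?_⟩
    · have : ∑' i, (1 - f i) ≤ a⁻¹ := by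
        rw [ENNReal.tsum_eq_iSup_sum]
        refine iSup_le fun s => ?_
        rw [ENNReal.le_inv_iff_mul_le, mul_comm]
        refine le_trans ?_ (prod_mul_one_add_le f hf s)
        gcongr
        exact iInf_le _ s
      exact lt_of_le_of_lt this (by simpa using h)
    · have := iInf_le (fun s : Finset ι => ∏ i ∈ s, f i) {i}
      simp only [Finset.prod_singleton] at this
      exact lt_of_lt_of_le h this
  · rintro ⟨hs, hp⟩
    have ht := ENNReal.tendsto_tsum_compl_atTop_zero hs.ne
    have hev := ht.eventually (gt_mem_nhds (show (0:ℝ≥0∞) < 2⁻¹ by simp))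
    obtain ⟨K, hK⟩ := hev.exists
    have hb : (∏ i ∈ K, f i) * 2⁻¹ ≤ ⨅ s : Finset ι, ∏ i ∈ s, f i := by
      refine le_iInf fun s => ?_
      have h1 : ∏ i ∈ K ∪ s, f i ≤ ∏ i ∈ s, f i :=
        Finset.prod_le_prod_of_subset_of_le_one' Finset.subset_union_right (fun i _ _ => hf i)
      refine le_trans ?_ h1
      rw [← Finset.union_sdiff_self_eq_union, Finset.prod_union Finset.disjoint_sdiff]
      gcongr
      have h2 := one_le_prod_add_sum f hf (s \ K)
      have h3 : ∑ i ∈ s \ K, (1 - f i) ≤ 2⁻¹ := by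
        refine le_trans ?_ hK.le
        have hinj : Function.Injective (fun i : {i // i ∈ s \ K} =>
            (⟨i.1, (Finset.mem_sdiff.1 i.2).2⟩ : {x // x ∉ K})) := by
          intro i j hij
          exact Subtype.ext (by simpa using hij)
        rw [← Finset.sum_coe_sort, ← tsum_fintype (L := .unconditional _)]
        exact ENNReal.tsum_comp_le_tsum_of_injective hinj (fun b => 1 - f b.1)
      have h4 : (2⁻¹ : ℝ≥0∞) + 2⁻¹ ≤ (∏ i ∈ s \ K, f i) + 2⁻¹ := by
        rw [ENNReal.inv_two_add_inv_two]
        exact h2.trans (by gcongr)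
      exact (ENNReal.add_le_add_iff_right (by simp)).1 h4
    refine lt_of_lt_of_le ?_ hb
    refine ENNReal.mul_pos ?_ (by simp)
    exact Finset.prod_ne_zero_iff.2 fun i _ => pos_iff_ne_zero.1 (hp i)

/-! ### Measurability -/

theorem mem_conjSub {G : Type*} [Group G] (g x : G) (H : Subgroup G) :
    x ∈ conjSub g H ↔ g⁻¹ * x * g ∈ H := by
  unfold conjSub
  constructor
  · rintro ⟨y, hy, rfl⟩
    simpa [mul_assoc] using hy
  · intro h
    exact ⟨_, h, by simp [mul_assoc]⟩

theorem continuous_dec {G : Type*} [Group G] (x : G) :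
    Continuous (fun (H : Subgroup G) => @decide (x ∈ H) (Classical.dec _)) := by
  have hc : Continuous (fun (H : Subgroup G) (g : G) => @decide (g ∈ H) (Classical.dec _)) :=
    continuous_induced_dom
  exact (continuous_apply x).comp hc

theorem isClopen_mem {G : Type*} [Group G] (x : G) :
    IsClopen {H : Subgroup G | x ∈ H} := by
  have h2 := continuous_dec x
  have := (isClopen_discrete ({true} : Set Bool)).preimage h2
  convert this using 1
  ext H
  simp

theorem measurableSet_mem {G : Type*} [Group G] (x : G) :
    MeasurableSet {H : Subgroup G | x ∈ H} := (isClopen_mem x).isOpen.measurableSet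

theorem measurable_conjSub {G : Type*} [Group G] (g : G) :
    Measurable (conjSub g : Subgroup G → Subgroup G) := by
  apply Continuous.measurable
  rw [continuous_induced_rng, continuous_pi_iff]
  intro x
  have h2 := continuous_dec (g⁻¹ * x * g)
  refine h2.congr fun H => ?_
  simp [mem_conjSub]

theorem measurableSet_sub_singleton {G : Type*} [Group G] [Countable G] (H : Subgroup G) :
    MeasurableSet ({H} : Set (Subgroup G)) := by
  have : ({H} : Set (Subgroup G)) = ⋂ x : G, {K : Subgroup G | x ∈ K ↔ x ∈ H} := by
    ext K
    simp [SetLike.ext_iff]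
  rw [this]
  refine MeasurableSet.iInter fun x => ?_
  by_cases hx : x ∈ H
  · simpa [hx] using measurableSet_mem x
  · simp only [hx, iff_false]
    exact (measurableSet_mem x).compl

theorem irs_mem_conj {G : Type*} [Group G] {θ : Measure (Subgroup G)} (hθ : IsIRS θ) (g x : G) :
    θ {H | g⁻¹ * x * g ∈ H} = θ {H | x ∈ H} := by
  conv_rhs => rw [← hθ.2 g]
  rw [Measure.map_apply (measurable_conjSub g) (measurableSet_mem x)]
  congr 1
  ext H
  simp [mem_conjSub]

theorem irs_singleton_conj {G : Type*} [Group G] [Countable G] {θ : Measure (Subgroup G)}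
    (hθ : IsIRS θ) (g : G) (H : Subgroup G) :
    θ {conjSub g H} = θ {H} := by
  conv_lhs => rw [← hθ.2 g]
  rw [Measure.map_apply (measurable_conjSub g) (measurableSet_sub_singleton _)]
  congr 1
  ext K
  simp only [Set.mem_preimage, Set.mem_singleton_iff]
  constructor
  · intro h
    ext x
    have := SetLike.ext_iff.1 h (g * x * g⁻¹)
    simpa [mem_conjSub, mul_assoc] using this
  · rintro rfl; rfl

/-! ### Neumann lemma for coset spaces -/

open scoped Pointwise in
theorem exists_move {Δ : Type*} [Group Δ] (Γ : Subgroup Δ) (hinf : Infinite (Δ ⧸ Γ))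
    (A B : Finset (Δ ⧸ Γ)) : ∃ g : Δ, ∀ a ∈ A, g • a ∉ B := by
  classical
  by_contra! hcon
  have hex : ∀ p : (Δ ⧸ Γ) × (Δ ⧸ Γ), ∃ g : Δ, g • p.1 = p.2 :=
    fun p => MulAction.exists_smul_eq Δ p.1 p.2
  choose w hw using hex
  have hcov : ⋃ p ∈ A ×ˢ B, (w p) • (MulAction.stabilizer Δ p.1 : Set Δ) = Set.univ := by
    rw [Set.eq_univ_iff_forall]
    intro g
    obtain ⟨a, ha, hb⟩ := hcon g
    simp only [Set.mem_iUnion]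
    refine ⟨(a, g • a), Finset.mem_product.2 ⟨ha, hb⟩, ?_⟩
    rw [mem_leftCoset_iff, SetLike.mem_coe, MulAction.mem_stabilizer_iff, mul_smul,
      inv_smul_eq_iff]
    exact (hw (a, g • a)).symm
  obtain ⟨p, _, hp⟩ := Subgroup.exists_finiteIndex_of_leftCoset_cover hcov
  apply hp.index_ne_zero
  rw [MulAction.index_stabilizer, MulAction.orbit_eq_univ]
  simp [Set.ncard_univ]

theorem exists_many {Δ : Type*} [Group Δ] (Γ : Subgroup Δ) (hinf : Infinite (Δ ⧸ Γ))
    (A : Finset (Δ ⧸ Γ)) (hA : A.Nonempty) (n : ℕ) :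
    ∃ G : Finset Δ, G.card = n ∧
      ∀ g ∈ G, ∀ h ∈ G, g ≠ h → ∀ a ∈ A, ∀ b ∈ A, g • a ≠ h • b := by
  classical
  induction n with
  | zero => exact ⟨∅, by simp⟩
  | succ n ih =>
    obtain ⟨G, hG, hd⟩ := ih
    obtain ⟨g, hg⟩ := exists_move Γ hinf A (G.biUnion fun h => A.image fun a => h • a)
    have hgone : ∀ a ∈ A, ∀ h ∈ G, ∀ b ∈ A, g • a ≠ h • b := by
      intro a ha h hh b hb e
      apply hg a ha
      rw [e, Finset.mem_biUnion]
      exact ⟨h, hh, Finset.mem_image_of_mem _ hb⟩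
    have hgG : g ∉ G := by
      intro h
      obtain ⟨a, ha⟩ := hA
      exact hgone a ha g h a ha rfl
    refine ⟨insert g G, by rw [Finset.card_insert_of_notMem hgG, hG], ?_⟩
    intro x hx y hy hxy a ha b hb
    rw [Finset.mem_insert] at hx hy
    rcases hx with rfl | hx <;> rcases hy with rfl | hy
    · exact absurd rfl hxy
    · exact hgone a ha y hy b hb
    · exact (hgone b hb x hx a ha).symm
    · exact hd x hx y hy hxy a ha b hb

/-! ### Second moment -/

theorem second_moment {α : Type*} [MeasurableSpace α] (ν : Measure α) [IsProbabilityMeasure ν]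
    {ι : Type*} (G : Finset ι) (A : ι → Set α) (hA : ∀ i, MeasurableSet (A i))
    (U : Set α) (hU : MeasurableSet U) (hAU : ∀ i, A i ⊆ U) (a d : ℝ)
    (h1 : ∀ i ∈ G, ν.real (A i) = a)
    (h2 : ∀ i ∈ G, ∀ j ∈ G, i ≠ j → ν.real (A i ∩ A j) ≤ d) (ha : 0 ≤ a) (hd : 0 ≤ d) :
    0 ≤ G.card * a + G.card ^ 2 * d - 2 * G.card ^ 2 * a ^ 2
      + G.card ^ 2 * a ^ 2 * ν.real U := by
  classical
  set n : ℝ := (G.card : ℝ) with hn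
  set l : ℝ := n * a
  have hIntble : ∀ s : Set α, MeasurableSet s → Integrable (s.indicator (fun _ => (1:ℝ))) ν :=
    fun s hs => (integrable_const 1).indicator hs
  have hval : ∀ s : Set α, MeasurableSet s → ∫ x, s.indicator (fun _ => (1:ℝ)) x ∂ν = ν.real s :=
    fun s hs => by simp [integral_indicator hs]
  have key : ∀ x, (∑ i ∈ G, (A i).indicator (fun _ => (1:ℝ)) x
      - l * U.indicator (fun _ => (1:ℝ)) x) ^ 2
      = ∑ i ∈ G, ∑ j ∈ G, (A i ∩ A j).indicator (fun _ => (1:ℝ)) x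
        - 2 * l * ∑ i ∈ G, (A i).indicator (fun _ => (1:ℝ)) x
        + l ^ 2 * U.indicator (fun _ => (1:ℝ)) x := by
    intro x
    have e1 : ∑ i ∈ G, ∑ j ∈ G, (A i ∩ A j).indicator (fun _ => (1:ℝ)) x
        = (∑ i ∈ G, (A i).indicator (fun _ => (1:ℝ)) x) ^ 2 := by
      rw [sq, Finset.sum_mul_sum]
      refine Finset.sum_congr rfl fun i _ => Finset.sum_congr rfl fun j _ => ?_
      by_cases hi : x ∈ A i <;> by_cases hj : x ∈ A j <;> simp [hi, hj]
    rw [e1]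
    by_cases hx : x ∈ U
    · simp only [hx, Set.indicator_of_mem]; ring
    · have : ∑ i ∈ G, (A i).indicator (fun _ => (1:ℝ)) x = 0 :=
        Finset.sum_eq_zero fun i _ => Set.indicator_of_notMem (fun h => hx (hAU i h)) _
      rw [this]; simp [hx]
  have hpos : 0 ≤ ∫ x, (∑ i ∈ G, (A i).indicator (fun _ => (1:ℝ)) x
      - l * U.indicator (fun _ => (1:ℝ)) x) ^ 2 ∂ν := integral_nonneg fun x => sq_nonneg _
  simp_rw [key] at hpos
  have i1 : Integrable (fun x => ∑ i ∈ G, ∑ j ∈ G, (A i ∩ A j).indicator (fun _ => (1:ℝ)) x) ν :=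
    integrable_finsetSum _ fun i _ => integrable_finsetSum _ fun j _ =>
      hIntble _ ((hA i).inter (hA j))
  have i2 : Integrable (fun x => ∑ i ∈ G, (A i).indicator (fun _ => (1:ℝ)) x) ν :=
    integrable_finsetSum _ fun i _ => hIntble _ (hA i)
  have i3 : Integrable (fun x => ∑ i ∈ G, ∑ j ∈ G, (A i ∩ A j).indicator (fun _ => (1:ℝ)) x
      - 2 * l * ∑ i ∈ G, (A i).indicator (fun _ => (1:ℝ)) x) ν := i1.sub (i2.const_mul _)
  rw [integral_add i3 ((hIntble U hU).const_mul _),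
    integral_sub i1 (i2.const_mul _), integral_const_mul, integral_const_mul, hval U hU,
    integral_finsetSum _ (fun i _ => hIntble _ (hA i)),
    integral_finsetSum _ (fun i _ => integrable_finsetSum _ fun j _ =>
      hIntble _ ((hA i).inter (hA j)))] at hpos
  have e2 : ∑ i ∈ G, ∫ x, (A i).indicator (fun _ => (1:ℝ)) x ∂ν = n * a := by
    rw [Finset.sum_congr rfl fun i hi => (hval _ (hA i)).trans (h1 i hi)]
    simp [hn]
  have e3 : ∑ i ∈ G, ∫ x, ∑ j ∈ G, (A i ∩ A j).indicator (fun _ => (1:ℝ)) x ∂ν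
      ≤ n * (a + n * d) := by
    have : ∀ i ∈ G, ∫ x, ∑ j ∈ G, (A i ∩ A j).indicator (fun _ => (1:ℝ)) x ∂ν ≤ a + n * d := by
      intro i hi
      rw [integral_finsetSum _ (fun j _ => hIntble _ ((hA i).inter (hA j)))]
      rw [← Finset.add_sum_erase _ _ hi]
      refine add_le_add ?_ ?_
      · rw [hval _ ((hA i).inter (hA i)), Set.inter_self, h1 i hi]
      · have : ∀ j ∈ G.erase i, ∫ x, (A i ∩ A j).indicator (fun _ => (1:ℝ)) x ∂ν ≤ d := by
          intro j hj
          rw [hval _ ((hA i).inter (hA j))]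
          exact h2 i hi j (Finset.mem_of_mem_erase hj) (Finset.ne_of_mem_erase hj).symm
        refine (Finset.sum_le_card_nsmul _ _ _ this).trans ?_
        rw [nsmul_eq_mul]
        refine mul_le_mul_of_nonneg_right ?_ hd
        rw [hn]
        exact_mod_cast Finset.card_erase_le
    refine (Finset.sum_le_card_nsmul _ _ _ this).trans ?_
    rw [nsmul_eq_mul]
  rw [e2] at hpos
  simp only [l] at hpos
  nlinarith [hpos, e3]


/-! ### The functions `c(γ, d) = θ(N_{d⁻¹γd})` -/

theorem npull_singleton {Δ : Type*} [Group Δ] (Γ : Subgroup Δ) (x : Γ) :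
    NpullSet Γ {(x : Δ)} = {Λ : Subgroup Γ | x ∈ Λ} := by
  ext Λ
  simp [NpullSet]

theorem core_conj {Δ : Type*} [Group Δ] {Γ : Subgroup Δ} {γ : Δ} (hγ : γ ∈ Γ.normalCore)
    (d : Δ) : d⁻¹ * γ * d ∈ Γ := by
  have := hγ d⁻¹
  simpa using this

theorem c_coset {Δ : Type*} [Group Δ] (Γ : Subgroup Δ) (θ : Measure (Subgroup Γ)) (hθ : IsIRS θ)
    {γ : Δ} (hγ : γ ∈ Γ.normalCore) {d e : Δ} (hde : d⁻¹ * e ∈ Γ) :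
    θ (NpullSet Γ {e⁻¹ * γ * e}) = θ (NpullSet Γ {d⁻¹ * γ * d}) := by
  set x : Γ := ⟨d⁻¹ * γ * d, core_conj hγ d⟩ with hx
  set h : Γ := ⟨d⁻¹ * e, hde⟩ with hh
  have e1 : e⁻¹ * γ * e = ((h⁻¹ * x * h : Γ) : Δ) := by
    simp [hx, hh, mul_assoc]
  have e2 : d⁻¹ * γ * d = (x : Δ) := rfl
  rw [e1, e2, npull_singleton, npull_singleton, irs_mem_conj hθ]

theorem mem_kerIRS {Δ : Type*} [Group Δ] (Γ : Subgroup Δ) (θ : Measure (Subgroup Γ))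
    (hθ : IsIRS θ) (x : Γ) : x ∈ kerIRS Γ θ ↔ θ {Λ : Subgroup Γ | x ∈ Λ} = 1 := by
  have := hθ.1
  have hae : ∀ y : Γ, θ {Λ : Subgroup Γ | y ∈ Λ} = 1 ↔ ∀ᵐ Λ ∂θ, y ∈ Λ := fun y =>
    (mem_ae_iff_prob_eq_one (measurableSet_mem y)).symm
  constructor
  · intro hx
    unfold kerIRS at hx
    induction hx using Subgroup.closure_induction with
    | mem y hy => exact hy
    | one => simp
    | mul y z _ _ hy hz =>
      rw [hae] at *
      filter_upwards [hy, hz] with Λ h1 h2 using mul_mem h1 h2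
    | inv y _ hy =>
      rw [hae] at *
      filter_upwards [hy] with Λ h1 using inv_mem h1
  · intro hx
    exact Subgroup.subset_closure hx

theorem coreKer_le {Δ : Type*} [Group Δ] (Γ : Subgroup Δ) (θ : Measure (Subgroup Γ)) :
    coreKer Γ θ ≤ Γ.normalCore := by
  apply Subgroup.normalCore_mono
  rintro _ ⟨y, _, rfl⟩
  exact y.2

theorem mem_coreKer {Δ : Type*} [Group Δ] (Γ : Subgroup Δ) (θ : Measure (Subgroup Γ))
    (hθ : IsIRS θ) {γ : Δ} (hγ : γ ∈ Γ.normalCore) :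
    γ ∈ coreKer Γ θ ↔ ∀ d : Δ, θ (NpullSet Γ {d⁻¹ * γ * d}) = 1 := by
  have key : ∀ d : Δ, d⁻¹ * γ * d ∈ (kerIRS Γ θ).map Γ.subtype ↔
      θ (NpullSet Γ {d⁻¹ * γ * d}) = 1 := by
    intro d
    set x : Γ := ⟨d⁻¹ * γ * d, core_conj hγ d⟩ with hx
    have e2 : d⁻¹ * γ * d = (x : Δ) := rfl
    rw [e2, npull_singleton, ← mem_kerIRS Γ θ hθ x]
    simp
  constructor
  · intro h d
    rw [← key]
    have := h d⁻¹
    simpa using this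
  · intro h d
    have := (key d⁻¹).2 (h d⁻¹)
    simpa using this

theorem nset_singleton {G : Type*} [Group G] (x : G) :
    NSet {x} = {H : Subgroup G | x ∈ H} := by
  ext H
  simp [NSet]

theorem nu_mem {Δ : Type*} [Group Δ] (Γ : Subgroup Δ) (T : Set Δ)
    (θ : Measure (Subgroup Γ)) (ν : Measure (Subgroup Δ)) (hc : CindSpec Γ T θ ν)
    {γ : Δ} (hγ : γ ∈ Γ.normalCore) :
    ν {H | γ ∈ H} = ∏' t : T, θ (NpullSet Γ {(t : Δ)⁻¹ * γ * (t : Δ)}) := by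
  have := (hc {γ}).2 (by simpa using hγ)
  simpa [nset_singleton] using this

theorem nu_not_mem {Δ : Type*} [Group Δ] (Γ : Subgroup Δ) (T : Set Δ)
    (θ : Measure (Subgroup Γ)) (ν : Measure (Subgroup Δ)) (hc : CindSpec Γ T θ ν)
    {γ : Δ} (hγ : γ ∉ Γ.normalCore) :
    ν {H | γ ∈ H} = 0 := by
  have := (hc {γ}).1 (by simpa using hγ)
  simpa [nset_singleton] using this

/-- The basic upper bound. -/
theorem nu_le_prod {Δ : Type*} [Group Δ] (Γ : Subgroup Δ) (T : Set Δ)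
    (hT : IsLeftTransversal Γ T) (θ : Measure (Subgroup Γ)) (hθ : IsIRS θ)
    (ν : Measure (Subgroup Δ)) (hc : CindSpec Γ T θ ν)
    (F : Finset Δ) (hF : (F : Set Δ) ⊆ Γ.normalCore) (K : Finset Δ)
    (hK : ∀ d ∈ K, ∀ e ∈ K, d⁻¹ * e ∈ Γ → d = e) (φ : Δ → Δ) (hφ : ∀ d ∈ K, φ d ∈ F) :
    ν (NSet (F : Set Δ)) ≤ ∏ d ∈ K, θ (NpullSet Γ {d⁻¹ * φ d * d}) := by
  classical
  have := hθ.1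
  have hr : ∀ d : Δ, ∃ t : T, d⁻¹ * (t : Δ) ∈ Γ := fun d => by
    obtain ⟨t, ⟨h1, h2⟩, _⟩ := hT d
    exact ⟨⟨t, h1⟩, h2⟩
  choose r hr using hr
  have hinj : Set.InjOn r (K : Set Δ) := by
    intro d hd e he h
    apply hK d hd e he
    have h1 := hr d
    have h2 := hr e
    rw [← h] at h2
    have := mul_mem h1 (inv_mem h2)
    simpa [mul_assoc] using this
  rw [(hc F).2 hF, tprod_eq_iInf_aux _ (fun t => prob_le_one)]
  refine (iInf_le _ (K.image r)).trans ?_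
  rw [Finset.prod_image hinj]
  refine Finset.prod_le_prod' fun d hd => ?_
  rw [← c_coset Γ θ hθ (hF (hφ d hd)) (hr d)]
  refine measure_mono ?_
  intro Λ hΛ x hx
  refine hΛ x ?_
  rw [Set.mem_singleton_iff] at hx
  exact ⟨φ d, hφ d hd, hx.symm⟩

theorem T_inj {Δ : Type*} [Group Δ] {Γ : Subgroup Δ} {T : Set Δ}
    (hT : IsLeftTransversal Γ T) {s t : Δ} (hs : s ∈ T) (ht : t ∈ T) (h : s⁻¹ * t ∈ Γ) : s = t := by
  obtain ⟨u, _, hu⟩ := hT s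
  rw [hu s ⟨hs, by simp [Γ.one_mem]⟩, hu t ⟨ht, h⟩]

theorem T_infinite {Δ : Type*} [Group Δ] {Γ : Subgroup Δ} (hinf : Infinite (Δ ⧸ Γ)) {T : Set Δ}
    (hT : IsLeftTransversal Γ T) : Infinite T := by
  refine Infinite.of_surjective (fun t : T => (QuotientGroup.mk (t : Δ) : Δ ⧸ Γ)) ?_
  intro q
  induction q using QuotientGroup.induction_on with
  | H d =>
    obtain ⟨t, ⟨h1, h2⟩, _⟩ := hT d
    exact ⟨⟨t, h1⟩, (QuotientGroup.eq.2 h2).symm⟩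

/-- Every atom is contained in the core of the kernel. -/
theorem atom_le {Δ : Type*} [Group Δ] [Countable Δ] (Γ : Subgroup Δ)
    (hinf : Infinite (Δ ⧸ Γ))
    (θ : Measure (Subgroup ↥Γ)) (hθ : IsIRS θ)
    (T : Set Δ) (hT : IsLeftTransversal Γ T)
    (ν : Measure (Subgroup Δ)) (hν : IsIRS ν) (hc : CindSpec Γ T θ ν)
    (H : Subgroup Δ) (hH : ν {H} ≠ 0) : H ≤ coreKer Γ θ := by
  classical
  have := hθ.1
  have := hν.1
  have := T_infinite hinf hT
  intro γ hγ
  have hcore : γ ∈ Γ.normalCore := by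
    by_contra hn
    apply hH
    refine measure_mono_null ?_ (nu_not_mem Γ T θ ν hc hn)
    simpa using hγ
  rw [mem_coreKer Γ θ hθ hcore]
  intro t0
  by_contra hq
  have hq1 : θ (NpullSet Γ {t0⁻¹ * γ * t0}) < 1 := lt_of_le_of_ne prob_le_one hq
  set q := θ (NpullSet Γ {t0⁻¹ * γ * t0}) with hqdef
  have hfin : Set.Finite {K : Subgroup Δ | ν {H} ≤ ν {K}} := by
    refine Measure.finite_const_le_meas_of_disjoint_iUnion ν (pos_iff_ne_zero.2 hH)
      (fun K => measurableSet_sub_singleton K) ?_ (measure_ne_top _ _)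
    intro K L hKL
    simpa using hKL
  have : Finite {K : Subgroup Δ | ν {H} ≤ ν {K}} := hfin
  let f : T → {K : Subgroup Δ | ν {H} ≤ ν {K}} := fun t =>
    ⟨conjSub ((t : Δ) * t0⁻¹) H, (irs_singleton_conj hν _ H).ge⟩
  obtain ⟨⟨Hone, hHone⟩, hy⟩ := Finite.exists_infinite_fiber f
  have hle : ∀ n : ℕ, ν {H} ≤ q ^ n := by
    intro n
    obtain ⟨S, hS⟩ := Infinite.exists_subset_card_eq (Set.preimage f {⟨Hone, hHone⟩}) n
    set K : Finset Δ := S.image (fun t : (Set.preimage f {⟨Hone, hHone⟩} : Set T) => ((t : T) : Δ)) with hKdef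
    have hKcard : K.card = n := by
      rw [hKdef, Finset.card_image_of_injective _ (fun a b h => Subtype.ext (Subtype.ext h)), hS]
    have hKT : ∀ d ∈ K, d ∈ T ∧ conjSub (d * t0⁻¹) H = Hone := by
      intro d hd
      obtain ⟨t, _, rfl⟩ := Finset.mem_image.1 hd
      refine ⟨t.1.2, ?_⟩
      have h1 : f t.1 = ⟨Hone, hHone⟩ := t.2
      exact congrArg Subtype.val h1
    let φ : Δ → Δ := fun d => (d * t0⁻¹) * γ * (d * t0⁻¹)⁻¹
    have hb := nu_le_prod Γ T hT θ hθ ν hc (K.image φ) (by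
        intro x hx
        obtain ⟨d, _, rfl⟩ := Finset.mem_image.1 (Finset.mem_coe.1 hx)
        exact (Subgroup.normalCore_normal Γ).conj_mem _ hcore _) K
        (fun d hd e he h => T_inj hT (hKT d hd).1 (hKT e he).1 h) φ
        (fun d hd => Finset.mem_image_of_mem _ hd)
    have hprod : ∏ d ∈ K, θ (NpullSet Γ {d⁻¹ * φ d * d}) = q ^ n := by
      rw [← hKcard, ← Finset.prod_const]
      refine Finset.prod_congr rfl fun d _ => ?_
      rw [hqdef]
      congr 3
      simp [φ, mul_assoc]
    rw [hprod] at hb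
    refine le_trans hHone (le_trans (measure_mono ?_) hb)
    rw [Set.singleton_subset_iff]
    intro x hx
    obtain ⟨d, hd, rfl⟩ := Finset.mem_image.1 (Finset.mem_coe.1 hx)
    rw [SetLike.mem_coe, ← (hKT d hd).2, mem_conjSub]
    simpa [φ, mul_assoc] using hγ
  have hlim := ENNReal.tendsto_pow_atTop_nhds_zero_of_lt_one hq1
  exact hH (le_antisymm (ge_of_tendsto' hlim hle) bot_le)

/-- Pairwise almost-independence. -/
theorem pair_le {Δ : Type*} [Group Δ] (Γ : Subgroup Δ) (T : Set Δ)
    (hT : IsLeftTransversal Γ T) (θ : Measure (Subgroup Γ)) (hθ : IsIRS θ)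
    (ν : Measure (Subgroup Δ)) (hc : CindSpec Γ T θ ν)
    {γ : Δ} (hγ : γ ∈ Γ.normalCore) (K : Finset Δ)
    (hK : ∀ d ∈ K, ∀ e ∈ K, d⁻¹ * e ∈ Γ → d = e) (g h : Δ)
    (hgh : ∀ d ∈ K, ∀ e ∈ K, (g * d)⁻¹ * (h * e) ∉ Γ) :
    ν ({H | g * γ * g⁻¹ ∈ H} ∩ {H | h * γ * h⁻¹ ∈ H})
      ≤ (∏ d ∈ K, θ (NpullSet Γ {d⁻¹ * γ * d})) ^ 2 := by
  classical
  set K1 := K.image (fun d => g * d) with hK1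
  set K2 := K.image (fun d => h * d) with hK2
  have hdis : Disjoint K1 K2 := by
    rw [Finset.disjoint_left]
    intro x hx hy
    obtain ⟨d, hd, rfl⟩ := Finset.mem_image.1 hx
    obtain ⟨e, he, h'⟩ := Finset.mem_image.1 hy
    apply hgh d hd e he
    rw [h']
    simp [Γ.one_mem]
  let φ : Δ → Δ := fun x => if x ∈ K1 then g * γ * g⁻¹ else h * γ * h⁻¹
  have hb := nu_le_prod Γ T hT θ hθ ν hc {g * γ * g⁻¹, h * γ * h⁻¹} (by
      intro x hx
      simp only [Finset.coe_insert, Finset.coe_singleton, Set.mem_insert_iff,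
        Set.mem_singleton_iff] at hx
      rcases hx with rfl | rfl
      · exact (Subgroup.normalCore_normal Γ).conj_mem _ hγ _
      · exact (Subgroup.normalCore_normal Γ).conj_mem _ hγ _) (K1 ∪ K2) (by
      intro x hx y hy hxy
      rw [Finset.mem_union] at hx hy
      rcases hx with hx | hx <;> rcases hy with hy | hy <;>
        obtain ⟨d, hd, rfl⟩ := Finset.mem_image.1 hx <;>
        obtain ⟨e, he, rfl⟩ := Finset.mem_image.1 hy
      · rw [hK d hd e he (by simpa [mul_assoc] using hxy)]
      · exact absurd hxy (hgh d hd e he)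
      · refine absurd (inv_mem hxy) ?_
        simpa only [mul_inv_rev, inv_inv, mul_assoc] using hgh e he d hd
      · rw [hK d hd e he (by simpa [mul_assoc] using hxy)]) φ (by
      intro d _
      by_cases hd : d ∈ K1 <;> simp [φ, hd])
  have hset : {H : Subgroup Δ | g * γ * g⁻¹ ∈ H} ∩ {H | h * γ * h⁻¹ ∈ H}
      = NSet (({g * γ * g⁻¹, h * γ * h⁻¹} : Finset Δ) : Set Δ) := by
    ext H
    simp [NSet, Set.insert_subset_iff]
  rw [hset]
  refine hb.trans (le_of_eq ?_)
  rw [Finset.prod_union hdis, sq]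
  congr 1
  · rw [hK1, Finset.prod_image (fun a _ b _ h => mul_left_cancel h)]
    refine Finset.prod_congr rfl fun d hd => ?_
    have : φ (g * d) = g * γ * g⁻¹ := if_pos (Finset.mem_image_of_mem _ hd)
    rw [this]
    congr 3
    simp [mul_assoc]
  · rw [hK2, Finset.prod_image (fun a _ b _ h => mul_left_cancel h)]
    refine Finset.prod_congr rfl fun d hd => ?_
    have : φ (h * d) = h * γ * h⁻¹ :=
      if_neg (Finset.disjoint_right.1 hdis (Finset.mem_image_of_mem _ hd))
    rw [this]
    congr 3
    simp [mul_assoc]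

/-- The core of the kernel has measure zero as soon as some `γ` outside it has
`ν(N_γ) > 0`. -/
theorem coreKer_null {Δ : Type*} [Group Δ] [Countable Δ] (Γ : Subgroup Δ)
    (hinf : Infinite (Δ ⧸ Γ))
    (θ : Measure (Subgroup ↥Γ)) (hθ : IsIRS θ)
    (T : Set Δ) (hT : IsLeftTransversal Γ T)
    (ν : Measure (Subgroup Δ)) (hν : IsIRS ν) (hc : CindSpec Γ T θ ν)
    (γ : Δ) (hγ : γ ∈ Γ.normalCore) (hγk : γ ∉ coreKer Γ θ) (hpos : 0 < ν {H | γ ∈ H}) :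
    ν {coreKer Γ θ} = 0 := by
  classical
  have := hθ.1
  have := hν.1
  set N := coreKer Γ θ with hN
  have hNn : N.Normal := Subgroup.normalCore_normal _
  by_contra hne
  set a : ℝ := ν.real {H | γ ∈ H} with ha
  set b : ℝ := ν.real {N} with hb
  have ha0 : 0 < a := ENNReal.toReal_pos hpos.ne' (measure_ne_top _ _)
  have hb0 : 0 < b := ENNReal.toReal_pos hne (measure_ne_top _ _)
  have ha1 : a ≤ 1 := measureReal_le_one
  have hb1 : b ≤ 1 := measureReal_le_one
  -- approximation
  obtain ⟨ε, hε0, hε⟩ : ∃ ε : ℝ, 0 < ε ∧ (a + ε) ^ 2 < a ^ 2 + a ^ 2 * b / 2 := by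
    have h1 : Filter.Tendsto (fun ε : ℝ => (a + ε) ^ 2) (nhdsWithin 0 (Set.Ioi 0))
        (nhds ((a + 0) ^ 2)) :=
      (Continuous.tendsto (by fun_prop) 0).mono_left nhdsWithin_le_nhds
    have h2 : (a + 0) ^ 2 < a ^ 2 + a ^ 2 * b / 2 := by
      have : 0 < a ^ 2 * b / 2 := by positivity
      simpa using this
    obtain ⟨ε, h3, h4⟩ := ((h1.eventually (gt_mem_nhds h2)).and self_mem_nhdsWithin).exists
    exact ⟨ε, h4, h3⟩
  have hinfl : ν {H | γ ∈ H} < ENNReal.ofReal (a + ε) := by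
    rw [← ENNReal.ofReal_toReal (measure_ne_top ν {H | γ ∈ H})]
    exact (ENNReal.ofReal_lt_ofReal_iff (by positivity)).2 (by rw [ha, measureReal_def]; linarith)
  rw [nu_mem Γ T θ ν hc hγ, tprod_eq_iInf_aux _ (fun t => prob_le_one), iInf_lt_iff] at hinfl
  obtain ⟨K0, hK0⟩ := hinfl
  obtain ⟨tt⟩ : Nonempty T := (T_infinite hinf hT).nonempty
  set K1 := insert tt K0 with hK1def
  have hK1 : ∏ t ∈ K1, θ (NpullSet Γ {(t : Δ)⁻¹ * γ * (t : Δ)}) < ENNReal.ofReal (a + ε) :=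
    lt_of_le_of_lt (Finset.prod_le_prod_of_subset_of_le_one' (Finset.subset_insert _ _)
      (fun i _ _ => prob_le_one)) hK0
  set K : Finset Δ := K1.image (fun t : T => (t : Δ)) with hKdef
  have hKT : ∀ d ∈ K, d ∈ T := by
    intro d hd
    obtain ⟨t, _, rfl⟩ := Finset.mem_image.1 hd
    exact t.2
  have hKp : ∏ d ∈ K, θ (NpullSet Γ {d⁻¹ * γ * d}) < ENNReal.ofReal (a + ε) := by
    rw [hKdef, Finset.prod_image (fun a _ b _ h => Subtype.ext h)]
    exact hK1
  have hKinj : ∀ d ∈ K, ∀ e ∈ K, d⁻¹ * e ∈ Γ → d = e :=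
    fun d hd e he h => T_inj hT (hKT d hd) (hKT e he) h
  obtain ⟨n, hn⟩ := exists_nat_gt (2 / (a * b))
  have hn0 : (0 : ℝ) < n := lt_trans (by positivity) hn
  obtain ⟨G, hGc, hG⟩ := exists_many Γ hinf (K.image (fun d => (QuotientGroup.mk d : Δ ⧸ Γ)))
    ⟨_, Finset.mem_image_of_mem _ (Finset.mem_image_of_mem _ (Finset.mem_insert_self tt K0))⟩ n
  have hGone : ∀ g ∈ G, ∀ h ∈ G, g ≠ h → ∀ d ∈ K, ∀ e ∈ K, (g * d)⁻¹ * (h * e) ∉ Γ := by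
    intro g hg h hh hgh d hd e he hmem
    refine hG g hg h hh hgh _ (Finset.mem_image_of_mem _ hd) _ (Finset.mem_image_of_mem _ he) ?_
    exact QuotientGroup.eq.2 hmem
  have hsm := second_moment ν G (fun g => {H : Subgroup Δ | g * γ * g⁻¹ ∈ H})
    (fun g => measurableSet_mem _) {N}ᶜ (measurableSet_sub_singleton N).compl
    (by
      intro g H hH hHN
      rw [Set.mem_singleton_iff] at hHN
      subst hHN
      apply hγk
      have := hNn.conj_mem _ hH g⁻¹
      simpa [mul_assoc] using this) a ((a + ε) ^ 2)
    (by
      intro g _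
      have := irs_mem_conj hν g⁻¹ γ
      rw [inv_inv] at this
      rw [ha, measureReal_def, measureReal_def, this])
    (by
      intro g hg h hh hgh
      have hp := pair_le Γ T hT θ hθ ν hc hγ K hKinj g h (hGone g hg h hh hgh)
      rw [measureReal_def]
      refine ENNReal.toReal_le_of_le_ofReal (by positivity) (hp.trans ?_)
      rw [ENNReal.ofReal_pow (by positivity)]
      gcongr) ha0.le (by positivity)
  rw [hGc, probReal_compl_eq_one_sub (measurableSet_sub_singleton N), ← hb] at hsm
  have h1 : 2 < n * (a * b) := by rwa [div_lt_iff₀ (by positivity)] at hn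
  have h2 : (n:ℝ) ^ 2 * (a + ε) ^ 2 < n ^ 2 * (a ^ 2 + a ^ 2 * b / 2) := by gcongr
  have h3 : (n * a) * 2 < (n * a) * (n * (a * b)) := by gcongr
  nlinarith [hsm, h2, h3]

/-- Characterization of non-atomicity of the co-induced IRS: for `[Δ : Γ] = ∞` and `T` a
transversal for `Δ/Γ`, `CIND_Γ^Δ(θ)` is non-atomic iff there is
`γ ∈ core_Δ(Γ) \ core_Δ(ker(θ))` with `∑_{t∈T} (1 - θ(N_{t⁻¹γt}^Γ)) < ∞` and
`θ(N_{t⁻¹γt}^Γ) > 0` for all `t ∈ T`. -/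
theorem coinduced_IRS_nonatomic_iff {Δ : Type*} [Group Δ] [Countable Δ] (Γ : Subgroup Δ)
    (hinf : Infinite (Δ ⧸ Γ))
    (θ : Measure (Subgroup ↥Γ)) (hθ : IsIRS θ)
    (T : Set Δ) (hT : IsLeftTransversal Γ T)
    (ν : Measure (Subgroup Δ)) (hν : IsIRS ν) (hc : CindSpec Γ T θ ν) :
    NonAtomicMeasure ν ↔
      ∃ γ : Δ, γ ∈ Γ.normalCore ∧ γ ∉ coreKer Γ θ ∧
        (∑' t : T, (1 - θ (NpullSet Γ {(t : Δ)⁻¹ * γ * (t : Δ)}))) < ⊤ ∧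
        ∀ t : T, 0 < θ (NpullSet Γ {(t : Δ)⁻¹ * γ * (t : Δ)}) := by
  classical
  have := hθ.1
  have := hν.1
  have hiff : ∀ γ : Δ, γ ∈ Γ.normalCore → (0 < ν {H | γ ∈ H} ↔
      (∑' t : T, (1 - θ (NpullSet Γ {(t : Δ)⁻¹ * γ * (t : Δ)}))) < ⊤ ∧
        ∀ t : T, 0 < θ (NpullSet Γ {(t : Δ)⁻¹ * γ * (t : Δ)})) := by
    intro γ hγ
    rw [nu_mem Γ T θ ν hc hγ]
    exact tprod_pos_iff _ (fun t => prob_le_one)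
  have hker : ∀ γ ∈ coreKer Γ θ, ∀ᵐ H ∂ν, γ ∈ H := by
    intro γ hγ
    have hγc := coreKer_le Γ θ hγ
    refine (mem_ae_iff_prob_eq_one (measurableSet_mem γ)).2 ?_
    rw [nu_mem Γ T θ ν hc hγc]
    have h1 := (mem_coreKer Γ θ hθ hγc).1 hγ
    simp [h1]
  constructor
  · intro hna
    by_contra hcon
    have hnot : ∀ γ, γ ∉ coreKer Γ θ → ∀ᵐ H ∂ν, γ ∉ H := by
      intro γ hγ
      rw [ae_iff]
      simp only [not_not]
      by_cases hγc : γ ∈ Γ.normalCore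
      · by_contra hne
        exact hcon ⟨γ, hγc, hγ, (hiff γ hγc).1 (pos_iff_ne_zero.2 hne)⟩
      · exact nu_not_mem Γ T θ ν hc hγc
    have hall : ∀ᵐ H ∂ν, ∀ γ : Δ, γ ∈ H ↔ γ ∈ coreKer Γ θ := by
      rw [ae_all_iff]
      intro γ
      by_cases hγ : γ ∈ coreKer Γ θ
      · filter_upwards [hker γ hγ] with H hH using iff_of_true hH hγ
      · filter_upwards [hnot γ hγ] with H hH using iff_of_false hH hγ
    have h0 : ∀ᵐ H ∂ν, H ≠ coreKer Γ θ := by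
      rw [ae_iff]
      simpa using hna (coreKer Γ θ)
    obtain ⟨H, h1, h2⟩ := (hall.and h0).exists
    exact h2 (SetLike.ext h1)
  · rintro ⟨γ, hγ, hγk, hs⟩ H
    by_contra hne
    have hle := atom_le Γ hinf θ hθ T hT ν hν hc H hne
    have hge : coreKer Γ θ ≤ H := by
      intro x hx
      by_contra hxH
      apply hne
      refine measure_mono_null ?_ (ae_iff.1 (hker x hx))
      simpa using hxH
    rw [le_antisymm hle hge] at hne
    exact hne (coreKer_null Γ hinf θ hθ T hT ν hν hc γ hγ hγk ((hiff γ hγ).2 hs))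

end IRSPaper
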